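/- Let (Ω, 𝓕, P) be a probability space, m ≥ 1 an integer, H ∈ (1/2, 1), and let L : (0,∞) → (0,∞) be slowly varying at +∞ and bounded away from 0 and +∞ on every compact subset of (0,∞). Let q : ℝ × Ω → ℝ be jointly measurable and uniformly bounded, and suppose there is a constant C₁ such that |E[ q(s, ·) q(t, ·) ]| ≤ C₁ L(|t − s|)^{2m} |t − s|^{−2(1 − H)} for all s ≠ t. Then for every continuous G : [0,1] → ℝ and every ζ ∈ (0, 1) there exists a constant C = C(G, ζ) such that for all ε ∈ (0, ζ), sup_{x ∈ [0,1]} E[ ( ∫_0^x q(y/ε, ·) G(y) dy )² ] ≤ C · ε^{2(1 − H)} L(1/ε)^{2m}. -/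

import Mathlib

open MeasureTheory Filter Set
open scoped Topology

noncomputable section

/-- `L : (0,∞) → (0,∞)` is slowly varying at `+∞`. -/
def SlowlyVaryingAtTop (L : ℝ → ℝ) : Prop :=
  ∀ lam : ℝ, 0 < lam → Tendsto (fun x => L (lam * x) / L x) atTop (𝓝 1)

/-- `L` is bounded away from `0` and `+∞` on every compact subset of `(0,∞)`. -/
def BddAwayOnCompacts (L : ℝ → ℝ) : Prop :=
  ∀ K : Set ℝ, K ⊆ Set.Ioi 0 → IsCompact K →
    ∃ c C : ℝ, 0 < c ∧ ∀ x ∈ K, c ≤ L x ∧ L x ≤ C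

/-!
Expanding the square and using Fubini turns the second moment into the double integral of
`G y * G z` times the covariance of `q` at lag `|y - z| / ε`. Write `φ x = L x ^ (2 * m) * x ^ (-β)`
with `β = 2 * (1 - H) < 1`. Potter's bound for the slowly varying `L ^ (2 * m)` gives, for any
`p > β`, `φ (|y - z| / ε) ≤ D * φ (1 / ε) * |y - z| ^ (-p)` as long as the lag stays away from `0`;
at short lags the boundedness of `q` gives the same estimate. Choosing `p < 1` makes
`|y - z| ^ (-p)` integrable, and `φ (1 / ε)` is the claimed rate.

Potter's bound is a statement about the increments of `f u = log (L (exp u))`. They tend to `0`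
pointwise, hence uniformly over bounded shifts (Karamata's uniform convergence theorem), so `f`
drops by at most `δ` over each unit step far out.
-/

open Metric

theorem exists_mem_notMem_sub_notMem {G : Type*} [AddGroup G] [MeasurableSpace G]
    [MeasurableAdd G] {μ : Measure G} [μ.IsAddRightInvariant] {A E₁ E₂ : Set G}
    (h : μ E₁ + μ E₂ < μ A) (s : G) : ∃ t ∈ A, t ∉ E₁ ∧ t - s ∉ E₂ := by
  by_contra! hcover
  have hsub : A ⊆ E₁ ∪ (· + -s) ⁻¹' E₂ := fun t ht =>
    or_iff_not_imp_left.2 fun ht₁ => by simpa [sub_eq_add_neg] using hcover t ht ht₁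
  refine h.not_ge ?_
  calc μ A ≤ μ E₁ + μ ((· + -s) ⁻¹' E₂) := (measure_mono hsub).trans (measure_union_le _ _)
    _ = μ E₁ + μ E₂ := by rw [measure_preimage_add_right]

theorem exists_tendstoUniformlyOn_closedBall_diff {f : ℝ → ℝ} (hf : Measurable f)
    (hinc : ∀ t, Tendsto (fun u => f (u + t) - f u) atTop (𝓝 0)) {w : ℕ → ℝ}
    (hw : Tendsto w atTop atTop) (r : ℝ) {η : ℝ} (hη : 0 < η) :
    ∃ E : Set ℝ, volume E ≤ ENNReal.ofReal η ∧
      TendstoUniformlyOn (fun n t => f (w n + t) - f (w n)) 0 atTop (closedBall 0 r \ E) := by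
  obtain ⟨E, -, -, hE, hunif⟩ := tendstoUniformlyOn_of_ae_tendsto (μ := volume)
    (f := fun n t => f (w n + t) - f (w n)) (g := 0)
    (fun n => Measurable.stronglyMeasurable (by fun_prop)) stronglyMeasurable_zero
    measurableSet_closedBall (measure_closedBall_lt_top (x := (0 : ℝ)) (r := r)).ne
    (ae_of_all _ fun t _ => (hinc t).comp hw) hη
  exact ⟨E, hE, hunif⟩

theorem tendsto_add_sub_of_norm_le {f : ℝ → ℝ} (hf : Measurable f)
    (hinc : ∀ t, Tendsto (fun u => f (u + t) - f u) atTop (𝓝 0)) {u s : ℕ → ℝ} {r : ℝ}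
    (hr : 0 < r) (hu : Tendsto u atTop atTop) (hs : ∀ᶠ n in atTop, ‖s n‖ ≤ r) :
    Tendsto (fun n => f (u n + s n) - f (u n)) atTop (𝓝 0) := by
  have hus : Tendsto (fun n => u n + s n) atTop atTop :=
    tendsto_atTop_add_right_of_le' _ (-r) hu (hs.mono fun n hn => (abs_le.1 hn).1)
  obtain ⟨E₁, hE₁, hunif₁⟩ :=
    exists_tendstoUniformlyOn_closedBall_diff hf hinc hu (2 * r) (half_pos hr)
  obtain ⟨E₂, hE₂, hunif₂⟩ :=
    exists_tendstoUniformlyOn_closedBall_diff hf hinc hus (2 * r) (half_pos hr)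
  have hsmall : volume E₁ + volume E₂ < volume (closedBall (0 : ℝ) r) :=
    calc volume E₁ + volume E₂ ≤ ENNReal.ofReal (r / 2) + ENNReal.ofReal (r / 2) := by gcongr
      _ = ENNReal.ofReal r := by
        rw [← ENNReal.ofReal_add (by positivity) (by positivity), add_halves]
      _ < ENNReal.ofReal (2 * r) := (ENNReal.ofReal_lt_ofReal_iff (by positivity)).2 (by linarith)
      _ = volume (closedBall (0 : ℝ) r) := (Real.volume_closedBall 0 r).symm
  refine Metric.tendsto_nhds.2 fun η hη => ?_
  filter_upwards [hs, Metric.tendstoUniformlyOn_iff.1 hunif₁ _ (half_pos hη),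
    Metric.tendstoUniformlyOn_iff.1 hunif₂ _ (half_pos hη)] with n hn h₁ h₂
  -- Compare both `u n` and `u n + s n` with the common point `u n + t`, where `t` and `t - s n`
  -- both avoid the exceptional sets of Egorov's theorem.
  obtain ⟨t, ht, ht₁, ht₂⟩ := exists_mem_notMem_sub_notMem hsmall (s n)
  rw [mem_closedBall_zero_iff] at ht
  have hclose₁ := h₁ t ⟨mem_closedBall_zero_iff.2 (by linarith), ht₁⟩
  have hclose₂ := h₂ (t - s n)
    ⟨mem_closedBall_zero_iff.2 ((norm_sub_le _ _).trans (by linarith)), ht₂⟩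
  rw [add_add_sub_cancel] at hclose₂
  simp only [Pi.zero_apply, dist_zero_left, dist_zero_right] at hclose₁ hclose₂ ⊢
  calc ‖f (u n + s n) - f (u n)‖
      = ‖f (u n + t) - f (u n) - (f (u n + t) - f (u n + s n))‖ := by rw [sub_sub_sub_cancel_left]
    _ ≤ ‖f (u n + t) - f (u n)‖ + ‖f (u n + t) - f (u n + s n)‖ := norm_sub_le _ _
    _ < η := by linarith

theorem tendstoUniformlyOn_add_sub {f : ℝ → ℝ} (hf : Measurable f)
    (hinc : ∀ t, Tendsto (fun u => f (u + t) - f u) atTop (𝓝 0)) {S : Set ℝ}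
    (hS : Bornology.IsBounded S) :
    TendstoUniformlyOn (fun u s => f (u + s) - f u) 0 atTop S := by
  obtain ⟨r, hr, hSr⟩ := hS.subset_closedBall_lt 0 0
  refine tendstoUniformlyOn_iff_tendsto.2 <| tendsto_of_seq_tendsto fun x hx => ?_
  obtain ⟨hu, hs⟩ := tendsto_prod_iff'.1 hx
  refine Uniform.tendsto_nhds_right.1 (tendsto_add_sub_of_norm_le hf hinc hr hu ?_)
  exact (tendsto_principal.1 hs).mono fun n hn => mem_closedBall_zero_iff.1 (hSr hn)

theorem le_add_mul_sub_add_one {f : ℝ → ℝ} {T δ : ℝ} (hδ : 0 ≤ δ)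
    (hstep : ∀ u ≥ T, ∀ s ∈ Icc (0 : ℝ) 1, f u ≤ f (u + s) + δ) {u v : ℝ} (hu : T ≤ u)
    (huv : u ≤ v) : f u ≤ f v + δ * (v - u + 1) := by
  have hnat : ∀ n : ℕ, f u ≤ f (u + n) + δ * n := by
    intro n
    induction n with
    | zero => simp
    | succ n ih =>
      have hunit := hstep (u + n) (by linarith [n.cast_nonneg (α := ℝ)]) 1 ⟨zero_le_one, le_rfl⟩
      push_cast
      rw [← add_assoc]
      linarith
  have hfloor := Nat.floor_le (sub_nonneg.2 huv)
  have hfrac := Nat.lt_floor_add_one (v - u)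
  set n := ⌊v - u⌋₊
  have hlast := hstep (u + n) (by linarith [n.cast_nonneg (α := ℝ)]) (v - u - n)
    ⟨by linarith, by linarith⟩
  rw [show u + n + (v - u - n) = v by ring] at hlast
  have : δ * n ≤ δ * (v - u) := by gcongr
  linarith [hnat n]

theorem exists_forall_le_add_mul_sub {f : ℝ → ℝ} (hf : Measurable f)
    (hinc : ∀ t, Tendsto (fun u => f (u + t) - f u) atTop (𝓝 0)) {a : ℝ}
    (hbdd : ∀ b, ∃ B, ∀ u ∈ Icc a b, |f u| ≤ B) {δ : ℝ} (hδ : 0 < δ) :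
    ∃ c, ∀ u v, a ≤ u → u ≤ v → f u ≤ c + f v + δ * (v - u) := by
  obtain ⟨T₀, hT₀⟩ := eventually_atTop.1 <|
    Metric.tendstoUniformlyOn_iff.1 (tendstoUniformlyOn_add_sub hf hinc (isBounded_Icc 0 1)) δ hδ
  set T := max T₀ a
  have hstep : ∀ u ≥ T, ∀ s ∈ Icc (0 : ℝ) 1, f u ≤ f (u + s) + δ := fun u hu s hs => by
    have h := hT₀ u ((le_max_left _ _).trans hu) s hs
    rw [Pi.zero_apply, dist_zero_left, Real.norm_eq_abs] at h
    linarith [(abs_lt.1 h).1]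
  obtain ⟨B, hB⟩ := hbdd T
  have hmax : ∀ u ≥ a, |f u - f (max u T)| ≤ 2 * B := fun u hu => by
    have hTB := hB T ⟨le_max_right _ _, le_rfl⟩
    rcases le_total u T with huT | hTu
    · rw [max_eq_right huT]
      linarith [abs_sub (f u) (f T), hB u ⟨hu, huT⟩]
    · rw [max_eq_left hTu, sub_self, abs_zero]
      linarith [abs_nonneg (f T)]
  refine ⟨4 * B + δ, fun u v hu huv => ?_⟩
  have hmaxu := abs_le.1 (hmax u hu)
  have hmaxv := abs_le.1 (hmax v (hu.trans huv))
  have hTail := le_add_mul_sub_add_one hδ.le hstep (le_max_right u T) (max_le_max_right T huv)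
  have hlip : δ * (max v T - max u T) ≤ δ * (v - u) := by
    have h := abs_max_sub_max_le_abs v u T
    rw [abs_of_nonneg (sub_nonneg.2 huv)] at h
    exact mul_le_mul_of_nonneg_left ((le_abs_self _).trans h) hδ.le
  linarith

theorem BddAwayOnCompacts.pos {L : ℝ → ℝ} (hL : BddAwayOnCompacts L) {x : ℝ} (hx : 0 < x) :
    0 < L x := by
  obtain ⟨c, C, hc, hcC⟩ := hL {x} (singleton_subset_iff.2 hx) isCompact_singleton
  exact hc.trans_le (hcC x rfl).1

theorem BddAwayOnCompacts.pow {L : ℝ → ℝ} (hL : BddAwayOnCompacts L) (n : ℕ) :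
    BddAwayOnCompacts fun x => L x ^ n := by
  intro K hK hKc
  obtain ⟨c, C, hc, hcC⟩ := hL K hK hKc
  refine ⟨c ^ n, C ^ n, pow_pos hc n, fun x hx => ⟨?_, ?_⟩⟩
  · exact pow_le_pow_left₀ hc.le (hcC x hx).1 n
  · exact pow_le_pow_left₀ (hL.pos (hK hx)).le (hcC x hx).2 n

theorem BddAwayOnCompacts.exists_abs_log_exp_le {L : ℝ → ℝ} (hL : BddAwayOnCompacts L)
    (a b : ℝ) : ∃ B, ∀ u ∈ Icc a b, |Real.log (L (Real.exp u))| ≤ B := by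
  obtain ⟨c, C, hc, hcC⟩ := hL (Real.exp '' Icc a b)
    (image_subset_iff.2 fun u _ => Real.exp_pos u) (isCompact_Icc.image Real.continuous_exp)
  refine ⟨max |Real.log c| |Real.log C|, fun u hu => ?_⟩
  obtain ⟨hcu, huC⟩ := hcC _ (mem_image_of_mem _ hu)
  exact abs_le_max_abs_abs (Real.log_le_log hc hcu)
    (Real.log_le_log (hL.pos (Real.exp_pos u)) huC)

theorem SlowlyVaryingAtTop.pow {L : ℝ → ℝ} (hL : SlowlyVaryingAtTop L) (n : ℕ) :
    SlowlyVaryingAtTop fun x => L x ^ n := fun lam hlam => by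
  simpa only [div_pow, one_pow] using (hL lam hlam).pow n

theorem SlowlyVaryingAtTop.tendsto_log_exp_add_sub {L : ℝ → ℝ} (hL : SlowlyVaryingAtTop L)
    (hpos : ∀ x > 0, 0 < L x) (t : ℝ) :
    Tendsto (fun u => Real.log (L (Real.exp (u + t))) - Real.log (L (Real.exp u))) atTop (𝓝 0) := by
  have hratio := ((hL _ (Real.exp_pos t)).comp Real.tendsto_exp_atTop).log one_ne_zero
  rw [Real.log_one] at hratio
  refine hratio.congr fun u => ?_
  rw [Function.comp_apply, Real.log_div (hpos _ (by positivity)).ne' (hpos _ (by positivity)).ne',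
    Real.exp_add, mul_comm]

theorem SlowlyVaryingAtTop.exists_le_mul_rpow {L : ℝ → ℝ} (hL : SlowlyVaryingAtTop L)
    (hmeas : Measurable L) (hbdd : BddAwayOnCompacts L) {a : ℝ} (ha : 0 < a) {δ : ℝ}
    (hδ : 0 < δ) :
    ∃ c > 0, ∀ x y, a ≤ x → x ≤ y → L x ≤ c * L y * (y / x) ^ δ := by
  obtain ⟨c, hc⟩ := exists_forall_le_add_mul_sub (f := fun u => Real.log (L (Real.exp u)))
    (by fun_prop) (hL.tendsto_log_exp_add_sub fun _ => hbdd.pos)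
    (hbdd.exists_abs_log_exp_le (Real.log a)) hδ
  refine ⟨Real.exp c, Real.exp_pos c, fun x y hax hxy => ?_⟩
  have hx : 0 < x := ha.trans_le hax
  have hy : 0 < y := hx.trans_le hxy
  have hlog := hc _ _ (Real.log_le_log ha hax) (Real.log_le_log hx hxy)
  simp only [Real.exp_log hx, Real.exp_log hy] at hlog
  calc L x = Real.exp (Real.log (L x)) := (Real.exp_log (hbdd.pos hx)).symm
    _ ≤ Real.exp (c + Real.log (L y) + δ * (Real.log y - Real.log x)) := Real.exp_le_exp.2 hlog
    _ = Real.exp c * L y * (y / x) ^ δ := by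
      rw [Real.exp_add, Real.exp_add, Real.exp_log (hbdd.pos hy),
        Real.rpow_def_of_pos (div_pos hy hx), Real.log_div hy.ne' hx.ne', mul_comm δ]

theorem SlowlyVaryingAtTop.exists_mul_rpow_le {L : ℝ → ℝ} (hL : SlowlyVaryingAtTop L)
    (hmeas : Measurable L) (hbdd : BddAwayOnCompacts L) {a : ℝ} (ha : 0 < a) {β p : ℝ}
    (hβp : β < p) :
    ∃ c > 0, ∀ x y, a ≤ x → x ≤ y → L x * x ^ (-β) ≤ c * (L y * y ^ (-β)) * (y / x) ^ p := by
  obtain ⟨c, hc, hpotter⟩ := hL.exists_le_mul_rpow hmeas hbdd ha (sub_pos.2 hβp)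
  refine ⟨c, hc, fun x y hax hxy => ?_⟩
  have hx : 0 < x := ha.trans_le hax
  have hy : 0 < y := hx.trans_le hxy
  have hscale : x ^ (-β) = y ^ (-β) * (y / x) ^ β := by
    rw [Real.div_rpow hy.le hx.le, Real.rpow_neg hy.le, Real.rpow_neg hx.le]
    field_simp
  calc L x * x ^ (-β) ≤ c * L y * (y / x) ^ (p - β) * x ^ (-β) := by
        gcongr
        exact hpotter x y hax hxy
    _ = c * (L y * y ^ (-β)) * ((y / x) ^ (p - β) * (y / x) ^ β) := by rw [hscale]; ring
    _ = c * (L y * y ^ (-β)) * (y / x) ^ p := by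
      rw [← Real.rpow_add (div_pos hy hx), sub_add_cancel]

theorem SlowlyVaryingAtTop.exists_min_mul_rpow_le {L : ℝ → ℝ} (hL : SlowlyVaryingAtTop L)
    (hmeas : Measurable L) (hbdd : BddAwayOnCompacts L) {a : ℝ} (ha : 0 < a) {β p : ℝ}
    (hβp : β < p) (hp : 0 ≤ p) (K C : ℝ) :
    ∃ D ≥ 0, ∀ u v, 0 < u → u ≤ v → a ≤ v →
      min K (C * (L u * u ^ (-β))) ≤ D * (L v * v ^ (-β)) * (v / u) ^ p := by
  obtain ⟨c, hc, hpotter⟩ := hL.exists_mul_rpow_le hmeas hbdd ha hβp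
  have hφ : ∀ x > 0, 0 < L x * x ^ (-β) := fun x hx =>
    mul_pos (hbdd.pos hx) (Real.rpow_pos_of_pos hx _)
  set φ : ℝ → ℝ := fun x => L x * x ^ (-β)
  have hφa : 0 < φ a := hφ a ha
  set B := max (|K| / φ a) |C|
  refine ⟨B * c, by positivity, fun u v hu huv hav => ?_⟩
  have hv : 0 < v := hu.trans_le huv
  have hφv : 0 < φ v := hφ v hv
  -- Below the threshold `a`, where Potter's bound says nothing about `φ u`, the constant `K` is
  -- used instead; either way `φ` is only ever evaluated at `max a u`.
  have hmin : min K (C * φ u) ≤ B * φ (max a u) := by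
    rcases le_total a u with hau | hua
    · rw [max_eq_right hau]
      have hφu : 0 < φ u := hφ u hu
      exact (min_le_right _ _).trans <| by gcongr; exact (le_abs_self C).trans (le_max_right _ _)
    · rw [max_eq_left hua, ← div_le_iff₀ hφa]
      calc min K (C * φ u) / φ a ≤ |K| / φ a := by
            gcongr
            exact (min_le_left _ _).trans (le_abs_self K)
        _ ≤ B := le_max_left _ _
  calc min K (C * φ u) ≤ B * φ (max a u) := hmin
    _ ≤ B * (c * φ v * (v / max a u) ^ p) := by
      gcongr
      exact hpotter _ v (le_max_left a u) (max_le hav huv)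
    _ ≤ B * (c * φ v * (v / u) ^ p) := by
      gcongr
      exact le_max_right a u
    _ = B * c * φ v * (v / u) ^ p := by ring

theorem intervalIntegrable_abs_rpow {r : ℝ} (hr : -1 < r) (a b : ℝ) :
    IntervalIntegrable (fun u : ℝ => |u| ^ r) volume a b := by
  refine intervalIntegrable_of_even (fun u => by rw [abs_neg]) fun x hx => ?_
  refine (intervalIntegral.intervalIntegrable_rpow' hr).congr_uIoo fun u hu => ?_
  rw [uIoo_of_le hx.le] at hu
  rw [abs_of_pos hu.1]

theorem integrable_indicator_abs_rpow {r : ℝ} (hr : -1 < r) (a b : ℝ) :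
    Integrable (indicator (Icc a b) fun u : ℝ => |u| ^ r) :=
  (integrable_indicator_iff measurableSet_Icc).2 <|
    (intervalIntegrable_iff' (by simp)).1 (intervalIntegrable_abs_rpow hr a b) |>.mono_set
      Icc_subset_uIcc

section SecondMoment

variable {α Ω : Type*} [MeasurableSpace α] [MeasurableSpace Ω] {μ : Measure α} {P : Measure Ω}

theorem integral_sq_integral_eq [SFinite μ] [SFinite P] {F : α × Ω → ℝ}
    (hF : Integrable (fun p : Ω × α × α => F (p.2.1, p.1) * F (p.2.2, p.1))
      (P.prod (μ.prod μ))) :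
    ∫ ω, (∫ y, F (y, ω) ∂μ) ^ 2 ∂P = ∫ y, ∫ z, ∫ ω, F (y, ω) * F (z, ω) ∂P ∂μ ∂μ := by
  calc ∫ ω, (∫ y, F (y, ω) ∂μ) ^ 2 ∂P
      = ∫ ω, ∫ p : α × α, F (p.1, ω) * F (p.2, ω) ∂μ.prod μ ∂P := by
        congr 1 with ω
        rw [integral_prod_mul (fun y => F (y, ω)) (fun z => F (z, ω)), sq]
    _ = ∫ p : α × α, ∫ ω, F (p.1, ω) * F (p.2, ω) ∂P ∂μ.prod μ := integral_integral_swap hF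
    _ = ∫ y, ∫ z, ∫ ω, F (y, ω) * F (z, ω) ∂P ∂μ ∂μ := integral_prod _ hF.integral_prod_right

theorem integrable_mul_mul_mul [IsFiniteMeasure P] [SFinite μ] {q : α × Ω → ℝ}
    (hq : Measurable q) {K : ℝ} (hqK : ∀ p, |q p| ≤ K) {G : α → ℝ} (hG : Integrable G μ) :
    Integrable (fun p : Ω × α × α => q (p.2.1, p.1) * G p.2.1 * (q (p.2.2, p.1) * G p.2.2))
      (P.prod (μ.prod μ)) := by
  have hGG : Integrable (fun p : Ω × α × α => G p.2.1 * G p.2.2) (P.prod (μ.prod μ)) :=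
    (hG.mul_prod hG).comp_snd P
  refine (hGG.bdd_mul (f := fun p => q (p.2.1, p.1) * q (p.2.2, p.1)) (c := K * K)
    (by fun_prop) (ae_of_all _ fun p => ?_)).congr (ae_of_all _ fun p => mul_mul_mul_comm _ _ _ _)
  exact norm_mul_le_of_le (hqK _) (hqK _)

end SecondMoment

theorem norm_setIntegral_setIntegral_le_of_norm_le_sub {A E : Type*} [AddCommGroup A]
    [MeasurableSpace A] [MeasurableAdd A] [MeasurableNeg A] {μ : Measure A}
    [μ.IsAddLeftInvariant] [μ.IsNegInvariant] [NullSingletonClass μ] [NormedAddCommGroup E]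
    [NormedSpace ℝ E] {s : Set A} (hs : MeasurableSet s) (hμs : μ s < ⊤) {k : A → ℝ}
    (hk : Integrable k μ) (hk₀ : 0 ≤ k) {R : A → A → E}
    (hR : ∀ y ∈ s, ∀ z ∈ s, y ≠ z → ‖R y z‖ ≤ k (y - z)) :
    ‖∫ y in s, ∫ z in s, R y z ∂μ ∂μ‖ ≤ (∫ u, k u ∂μ) * μ.real s := by
  refine norm_setIntegral_le_of_norm_le_const hμs fun y hy => ?_
  have hky : Integrable (fun z => k (y - z)) μ := hk.comp_sub_left y
  have hne : ∀ᵐ z ∂μ.restrict s, z ≠ y :=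
    ae_restrict_of_ae (compl_mem_ae_iff.2 (measure_singleton y))
  calc ‖∫ z in s, R y z ∂μ‖ ≤ ∫ z in s, k (y - z) ∂μ := by
        refine norm_integral_le_of_norm_le hky.integrableOn ?_
        filter_upwards [hne, ae_restrict_mem hs] with z hzy hz using hR y hy z hz hzy.symm
    _ ≤ ∫ z, k (y - z) ∂μ := setIntegral_le_integral hky (ae_of_all _ fun z => hk₀ (y - z))
    _ = ∫ u, k u ∂μ := integral_sub_left_eq_self k μ y

section WeightedSecondMoment

variable {Ω : Type*} [MeasurableSpace Ω] {P : Measure Ω} [IsFiniteMeasure P] {q : ℝ × Ω → ℝ}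
  {K M : ℝ} {s : Set ℝ} {G : ℝ → ℝ}

theorem integral_sq_setIntegral_mul_le (hq : Measurable q) (hqK : ∀ p, |q p| ≤ K)
    (hs : MeasurableSet s) (hs_fin : volume s < ⊤)
    (hG : AEStronglyMeasurable G (volume.restrict s)) (hGM : ∀ y ∈ s, |G y| ≤ M)
    {k : ℝ → ℝ} (hk : Integrable k) (hk₀ : 0 ≤ k)
    (hcov : ∀ y ∈ s, ∀ z ∈ s, y ≠ z → |∫ ω, q (y, ω) * q (z, ω) ∂P| ≤ k (y - z)) :
    ∫ ω, (∫ y in s, q (y, ω) * G y) ^ 2 ∂P ≤ M * M * (∫ u, k u) * volume.real s := by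
  have hGint : IntegrableOn G s :=
    .of_bound hs_fin hG M ((ae_restrict_iff' hs).2 (ae_of_all _ hGM))
  have hweighted : ∀ y ∈ s, ∀ z ∈ s, y ≠ z →
      ‖∫ ω, q (y, ω) * G y * (q (z, ω) * G z) ∂P‖ ≤ M * M * k (y - z) := by
    intro y hy z hz hyz
    simp only [mul_mul_mul_comm _ (G y)]
    rw [integral_mul_const, mul_comm]
    exact norm_mul_le_of_le (norm_mul_le_of_le (hGM y hy) (hGM z hz)) (hcov y hy z hz hyz)
  rw [integral_sq_integral_eq (F := fun p => q p * G p.1) (integrable_mul_mul_mul hq hqK hGint),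
    ← integral_const_mul]
  exact (le_abs_self _).trans <| norm_setIntegral_setIntegral_le_of_norm_le_sub hs hs_fin
    (hk.const_mul (M * M)) (fun u => mul_nonneg (mul_self_nonneg M) (hk₀ u)) hweighted

theorem integral_sq_setIntegral_mul_le_of_abs_le_rpow (hq : Measurable q)
    (hqK : ∀ p, |q p| ≤ K) (hs : MeasurableSet s) (hs_fin : volume s < ⊤)
    (hG : AEStronglyMeasurable G (volume.restrict s)) (hGM : ∀ y ∈ s, |G y| ≤ M)
    {d : ℝ} (hsd : ∀ y ∈ s, ∀ z ∈ s, |y - z| ≤ d) {A r : ℝ} (hA : 0 ≤ A) (hr : -1 < r)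
    (hcov : ∀ y ∈ s, ∀ z ∈ s, y ≠ z → |∫ ω, q (y, ω) * q (z, ω) ∂P| ≤ A * |y - z| ^ r) :
    ∫ ω, (∫ y in s, q (y, ω) * G y) ^ 2 ∂P ≤
      M * M * (A * ∫ u in Icc (-d) d, |u| ^ r) * volume.real s := by
  have hnonneg : 0 ≤ indicator (Icc (-d) d) fun u : ℝ => |u| ^ r :=
    indicator_nonneg fun u _ => by positivity
  rw [← integral_indicator measurableSet_Icc, ← integral_const_mul]
  refine integral_sq_setIntegral_mul_le hq hqK hs hs_fin hG hGM
    ((integrable_indicator_abs_rpow hr (-d) d).const_mul A)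
    (fun u => mul_nonneg hA (hnonneg u)) fun y hy z hz hyz => ?_
  rw [indicator_of_mem (mem_Icc.2 (abs_le.1 (hsd y hy z hz)))]
  exact hcov y hy z hz hyz

end WeightedSecondMoment

theorem SlowlyVaryingAtTop.exists_abs_rescaled_le {L : ℝ → ℝ} (hL : SlowlyVaryingAtTop L)
    (hmeas : Measurable L) (hbdd : BddAwayOnCompacts L) {β p : ℝ} (hβp : β < p) (hp : 0 ≤ p)
    {R : ℝ → ℝ → ℝ} {K C ζ : ℝ} (hRK : ∀ s t, |R s t| ≤ K)
    (hRC : ∀ s t, s ≠ t → |R s t| ≤ C * L |t - s| * |t - s| ^ (-β)) (hζ : 0 < ζ) :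
    ∃ D ≥ 0, ∀ ε ∈ Ioc 0 ζ, ∀ y z, y ≠ z → |y - z| ≤ 1 →
      |R (y / ε) (z / ε)| ≤ D * (ε ^ β * L (1 / ε)) * |y - z| ^ (-p) := by
  obtain ⟨D, hD, hdom⟩ :=
    hL.exists_min_mul_rpow_le hmeas hbdd (one_div_pos.2 hζ) hβp hp K C
  refine ⟨D, hD, fun ε ⟨hε, hεζ⟩ y z hyz hyz₁ => ?_⟩
  have hd : 0 < |y - z| := abs_sub_pos.2 hyz
  have hlag : |z / ε - y / ε| = |y - z| / ε := by
    rw [← sub_div, abs_div, abs_of_pos hε, abs_sub_comm]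
  have hcov := hRC (y / ε) (z / ε) fun h => hyz ((div_left_inj' hε.ne').1 h)
  rw [hlag, mul_assoc] at hcov
  have h := (le_min (hRK _ _) hcov).trans <|
    hdom _ (1 / ε) (div_pos hd hε) (by gcongr) (by gcongr)
  rwa [div_div_div_cancel_right₀ hε.ne', one_div |y - z|, Real.inv_rpow hd.le,
    ← Real.rpow_neg hd.le, mul_comm (L _), one_div, Real.inv_rpow hε.le, Real.rpow_neg hε.le,
    inv_inv, ← one_div] at h

theorem second_moment_oscillatory_bound_general
    {Ω : Type*} [MeasurableSpace Ω] (P : Measure Ω) [IsFiniteMeasure P]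
    {β : ℝ} (hβ : β < 1) {L : ℝ → ℝ} (hLmeas : Measurable L)
    (hLslow : SlowlyVaryingAtTop L) (hLbdd : BddAwayOnCompacts L)
    {q : ℝ × Ω → ℝ} (hqmeas : Measurable q) {K : ℝ} (hqbdd : ∀ p, |q p| ≤ K) {C₁ : ℝ}
    (hcov : ∀ s t : ℝ, s ≠ t →
      |∫ ω, q (s, ω) * q (t, ω) ∂P| ≤ C₁ * L |t - s| * |t - s| ^ (-β))
    {G : ℝ → ℝ} (hGmeas : AEStronglyMeasurable G (volume.restrict (Icc 0 1)))
    {M : ℝ} (hGbdd : ∀ y ∈ Icc (0 : ℝ) 1, |G y| ≤ M) {ζ : ℝ} (hζ : 0 < ζ) :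
    ∃ C : ℝ, ∀ ε ∈ Ioc 0 ζ, ∀ x ∈ Icc (0 : ℝ) 1,
      ∫ ω, (∫ y in (0 : ℝ)..x, q (y / ε, ω) * G y) ^ 2 ∂P ≤ C * ε ^ β * L (1 / ε) := by
  obtain ⟨p, hp, hp₁⟩ := exists_between (max_lt hβ zero_lt_one)
  obtain ⟨hβp, hp₀⟩ := max_lt_iff.1 hp
  have hRK : ∀ s t, |∫ ω, q (s, ω) * q (t, ω) ∂P| ≤ K * K * P.real univ := fun s t => by
    rw [← Real.norm_eq_abs]
    exact norm_integral_le_of_norm_le_const <| ae_of_all _ fun ω =>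
      norm_mul_le_of_le (hqbdd _) (hqbdd _)
  obtain ⟨D, hD, hdecay⟩ :=
    hLslow.exists_abs_rescaled_le hLmeas hLbdd hβp hp₀.le hRK hcov hζ
  set I : ℝ := ∫ u in Icc (-1) 1, |u| ^ (-p)
  have hI : 0 ≤ I := setIntegral_nonneg measurableSet_Icc fun u _ => by positivity
  refine ⟨M * M * D * I, fun ε hε x hx => ?_⟩
  set A := D * (ε ^ β * L (1 / ε))
  have hA : 0 ≤ A := by
    have := hε.1
    have := hLbdd.pos (one_div_pos.2 hε.1)
    positivity
  have hsub : Ioc 0 x ⊆ Icc 0 1 := fun y hy => ⟨hy.1.le, hy.2.trans hx.2⟩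
  have hdist : ∀ y ∈ Ioc 0 x, ∀ z ∈ Ioc 0 x, |y - z| ≤ 1 := fun y hy z hz =>
    abs_sub_le_of_nonneg_of_le (hsub hy).1 (hsub hy).2 (hsub hz).1 (hsub hz).2
  simp only [intervalIntegral.integral_of_le hx.1]
  calc ∫ ω, (∫ y in Ioc 0 x, q (y / ε, ω) * G y) ^ 2 ∂P
      ≤ M * M * (A * I) * volume.real (Ioc 0 x) :=
        integral_sq_setIntegral_mul_le_of_abs_le_rpow (q := fun p => q (p.1 / ε, p.2))
          (by fun_prop) (fun _ => hqbdd _) measurableSet_Ioc measure_Ioc_lt_top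
          (hGmeas.mono_set hsub) (fun y hy => hGbdd y (hsub hy)) hdist hA (by linarith)
          fun y hy z hz hyz => hdecay ε hε y z hyz (hdist y hy z hz)
    _ ≤ M * M * (A * I) * 1 := by
      rw [Real.volume_real_Ioc_of_le hx.1, sub_zero]
      exact mul_le_mul_of_nonneg_left hx.2 (mul_nonneg (mul_self_nonneg M) (mul_nonneg hA hI))
    _ = M * M * D * I * ε ^ β * L (1 / ε) := by ring

/-- For a uniformly bounded process `q` whose covariance satisfies
`|E[q(s)q(t)]| ≤ C₁ L(|t-s|)^{2m} |t-s|^{-2(1-H)}`, one has, uniformly in `x ∈ [0,1]` and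
`ε ∈ (0,ζ)`: `E[(∫_0^x q(y/ε) G(y) dy)²] ≤ C ε^{2(1-H)} L(1/ε)^{2m}`. -/
theorem second_moment_oscillatory_bound
    {Ω : Type*} [MeasurableSpace Ω] (P : Measure Ω) [IsProbabilityMeasure P]
    (m : ℕ) (hm : 1 ≤ m) (H : ℝ) (hH : H ∈ Set.Ioo (1 / 2 : ℝ) 1)
    (L : ℝ → ℝ) (hLpos : ∀ x > 0, 0 < L x) (hLmeas : Measurable L)
    (hLslow : SlowlyVaryingAtTop L) (hLbdd : BddAwayOnCompacts L)
    (q : ℝ × Ω → ℝ) (hqmeas : Measurable q) (K : ℝ) (hqbdd : ∀ p, |q p| ≤ K)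
    (C₁ : ℝ)
    (hcov : ∀ s t : ℝ, s ≠ t →
      |∫ ω, q (s, ω) * q (t, ω) ∂P| ≤ C₁ * L |t - s| ^ (2 * m) * |t - s| ^ (-(2 * (1 - H))))
    (G : ℝ → ℝ) (hG : ContinuousOn G (Set.Icc 0 1)) (ζ : ℝ) (hζ : ζ ∈ Set.Ioo (0 : ℝ) 1) :
    ∃ C : ℝ, ∀ ε ∈ Set.Ioo (0 : ℝ) ζ, ∀ x ∈ Set.Icc (0 : ℝ) 1,
      (∫ ω, (∫ y in (0 : ℝ)..x, q (y / ε, ω) * G y) ^ 2 ∂P) ≤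
        C * ε ^ (2 * (1 - H)) * L (1 / ε) ^ (2 * m) := by
  obtain ⟨M, hM⟩ := isCompact_Icc.exists_bound_of_continuousOn hG
  obtain ⟨C, hC⟩ := second_moment_oscillatory_bound_general P (β := 2 * (1 - H))
    (by linarith [hH.1]) (hLmeas.pow_const (2 * m)) (hLslow.pow (2 * m)) (hLbdd.pow (2 * m))
    hqmeas hqbdd hcov (hG.aestronglyMeasurable measurableSet_Icc) hM hζ.1
  exact ⟨C, fun ε hε => hC ε ⟨hε.1, hε.2.le⟩⟩

end
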